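/- arXiv:1911.08441 — 2 statements merged into one kernel-verified Lean document; each statement's English description precedes it below -/
import Mathlib

section
/- Let L_{j,i} ∈ R = K[x_0, x_1, …, x_n] (1 ≤ j ≤ n, 1 ≤ i ≤ ℓ_j, n ≥ 2) be linear forms satisfying condition (α), set f_j = ∏_{i=1}^{ℓ_j} L_{j,i}, and let I = (f_i f_j : 1 ≤ i < j ≤ n) be the defining ideal of a complete grid or pseudo-grid of lines of type (ℓ_1, …, ℓ_n). Then for every h with 0 ≤ h ≤ n−2, dim_K Tor_{h+1}^R(R/I, R/(x_0, x_1, …, x_n)) = (h+1)·C(n, h+2), and Tor_j^R(R/I, R/(x_0, x_1, …, x_n)) = 0 for all j ≥ n; i.e., the mapping-cone resolution of I with free modules of ranks (h+1)·C(n, h+2) is minimal. -/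
open CategoryTheory MvPolynomial

/-- The dimension over `K` of (the carrier of) a module `M` over a `K`-algebra `R`. -/
noncomputable def kdim (K R : Type) [Field K] [CommRing R] [Algebra K R]
    (M : ModuleCat R) : Cardinal :=
  @Module.rank K M _ _ (Module.compHom M (algebraMap K R))

/-- `Tor_h^T(T/N, T/𝔪_T)` for `T = K[x_0,…,x_{m-1}]` with irrelevant maximal ideal `𝔪_T`. -/
noncomputable def torModule (K : Type) [Field K] (m : ℕ)
    (N : Ideal (MvPolynomial (Fin m) K)) (h : ℕ) : ModuleCat (MvPolynomial (Fin m) K) :=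
  ((Tor (ModuleCat (MvPolynomial (Fin m) K)) h).obj
      (ModuleCat.of _ (MvPolynomial (Fin m) K ⧸ N))).obj
    (ModuleCat.of _ (MvPolynomial (Fin m) K ⧸
      Ideal.span (Set.range (X : Fin m → MvPolynomial (Fin m) K))))

/-!
Let `𝔪` be the irrelevant ideal. Call a map of modules Tor-trivial if it induces zero on every
`Tor_h(-, R/𝔪)`; along such maps mapping cones of minimal resolutions stay minimal, so Betti
numbers add up. Write `J_s` for the ideal generated by the `f_i` with `i ∈ s`, and `I_s` for the one
generated by the products `f_i f_j` with `i ≠ j` in `s`. For `a ∉ s`,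

  `J_{s ∪ a} = J_s + f_a R`  and  `I_{s ∪ a} = I_s + f_a J_s`.

Both are of the form `A + gB` with `A ≤ B`, where `g ∈ 𝔪` is a nonzerodivisor on `B/A`: for `I_s`
this holds because `I_s` is the intersection of `J_s` and the ideals `J_{s \ i}`, `i ∈ s`. If
`A → B` is Tor-trivial, then so is `A + gB → B`, because multiplication by `g` on `B/A` kills Tor,
and the Betti numbers of `A + gB` are those of `A` plus those of `B/A`, i.e. those of `A` and `B`
plus those of `A` shifted by one. Starting from `s = ∅`, Pascal's rule gives `C(|s|, h+1)` for `J_s`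
and `(h+1) C(|s|, h+2)` for `I_s`.

All this only requires each `f_j` to be a nonzerodivisor modulo any subset of the others. Linearly
independent linear forms have this property since they are part of a system of coordinates, and the
property is multiplicative in each member of the family separately, hence passes from the forms
`L_{j,i}` to their products `f_j`.
-/

universe u

section TorFunctor

open MonoidalCategory

variable {R : Type u} [CommRing R]

/-- The functor `M ↦ M ⊗ P` for a fixed chain complex `P`. -/
noncomputable def tensorComplex (P : ChainComplex (ModuleCat.{u} R) ℕ) :
    ModuleCat.{u} R ⥤ ChainComplex (ModuleCat.{u} R) ℕ where
  obj M := (((tensoringLeft _).obj M).mapHomologicalComplex _).obj P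
  map φ := (NatTrans.mapHomologicalComplex ((tensoringLeft _).map φ) _).app P

instance (P : ChainComplex (ModuleCat.{u} R) ℕ) :
    (tensorComplex P).PreservesZeroMorphisms where
  map_zero M M' := by
    ext i : 1
    exact MonoidalPreadditive.zero_whiskerRight

variable {N : ModuleCat.{u} R} (Q : ProjectiveResolution N) (h : ℕ)

/-- The functor `Tor_h(-, N)`, computed with the projective resolution `Q` of `N`. -/
noncomputable def torFunctor : ModuleCat.{u} R ⥤ ModuleCat.{u} R :=
  tensorComplex Q.complex ⋙ HomologicalComplex.homologyFunctor _ _ h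

/-- `torFunctor` agrees with the `Tor` of the library. -/
noncomputable def torIso (M : ModuleCat.{u} R) :
    ((Tor _ h).obj M).obj N ≅ (torFunctor Q h).obj M :=
  Q.isoLeftDerivedObj ((tensoringLeft _).obj M) h

instance : (torFunctor Q h).PreservesZeroMorphisms :=
  inferInstanceAs (tensorComplex Q.complex ⋙ _).PreservesZeroMorphisms

/-- Tensoring a complex `P` with `R` gives back `P`. -/
noncomputable def tensorComplexUnitIso (P : ChainComplex (ModuleCat.{u} R) ℕ) :
    (tensorComplex P).obj (ModuleCat.of R R) ≅ P :=
  HomologicalComplex.Hom.isoOfComponents (fun i ↦ λ_ (P.X i))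
    fun _ _ _ ↦ (MonoidalCategory.leftUnitor_naturality _).symm

lemma torFunctor_zero_ring : Nonempty ((torFunctor Q 0).obj (ModuleCat.of R R) ≅ N) :=
  ⟨HomologicalComplex.homologyMapIso (tensorComplexUnitIso Q.complex) 0 ≪≫
    asIso (HomologicalComplex.homologyMap Q.π 0) ≪≫
    HomologicalComplex.singleObjHomologySelfIso _ _ _⟩

lemma isZero_torFunctor_succ_ring :
    Limits.IsZero ((torFunctor Q (h + 1)).obj (ModuleCat.of R R)) :=
  (Q.complex_exactAt_succ h).isZero_homology.of_iso
    (HomologicalComplex.homologyMapIso (tensorComplexUnitIso Q.complex) (h + 1))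

lemma torFunctor_map_smul_id (g : R) (M : ModuleCat.{u} R) :
    (torFunctor Q h).map (g • 𝟙 M) = g • 𝟙 _ := by
  have hcomplex : (tensorComplex Q.complex).map (g • 𝟙 M) = g • 𝟙 _ := by
    ext i : 1
    exact (MonoidalLinear.smul_whiskerRight g (𝟙 M) _).trans (congrArg _ (id_whiskerRight _ _))
  rw [torFunctor, Functor.comp_map, hcomplex]
  exact (ShortComplex.homologyMap_smul (S₁ := ((tensorComplex Q.complex).obj M).sc h) (𝟙 _) g).trans
    (congrArg _ (ShortComplex.homologyMap_id _))

lemma torFunctor_map_smul_id_eq_zero {g : R} (hg : ∀ x : N, g • x = 0) (M : ModuleCat.{u} R) :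
    (torFunctor Q h).map (g • 𝟙 M) = 0 := by
  have H : Homotopy (g • 𝟙 Q.complex) 0 := ProjectiveResolution.liftHomotopyZero _ <| by
    ext x
    exact (map_smul (Q.π.f 0).hom g x).trans (hg _)
  let F := (tensoringLeft (ModuleCat.{u} R)).obj M
  have hF : (tensorComplex Q.complex).map (g • 𝟙 M) =
      (F.mapHomologicalComplex _).map (g • 𝟙 Q.complex) := by
    ext i : 1
    change (g • 𝟙 M) ▷ Q.complex.X i = M ◁ (g • 𝟙 (Q.complex.X i))
    rw [MonoidalLinear.smul_whiskerRight, MonoidalLinear.whiskerLeft_smul, id_whiskerRight,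
      whiskerLeft_id]
  have hhomology : HomologicalComplex.homologyMap ((F.mapHomologicalComplex _).map
      (g • 𝟙 Q.complex)) h = 0 := by
    rw [(F.mapHomotopy H).homologyMap_eq, Functor.map_zero, HomologicalComplex.homologyMap_zero]
  exact (congrArg (HomologicalComplex.homologyMap · h) hF).trans hhomology

lemma torFunctor_smul_eq_zero {g : R} (hg : ∀ x : N, g • x = 0) {M : ModuleCat.{u} R}
    (x : (torFunctor Q h).obj M) : g • x = 0 :=
  congr($((torFunctor_map_smul_id Q h g M).symm.trans (torFunctor_map_smul_id_eq_zero Q h hg M)) x)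

section LongExactSequence

instance (i : ℕ) : Module.Flat R (Q.complex.X i) := by
  have : Module.Projective R (Q.complex.X i) :=
    (IsProjective.iff_projective _).2 (Q.projective i)
  infer_instance

variable {S : ShortComplex (ModuleCat.{u} R)} (hS : S.ShortExact)
include hS

lemma shortExact_map_tensorComplex : (S.map (tensorComplex Q.complex)).ShortExact := by
  refine HomologicalComplex.shortExact_of_degreewise_shortExact _ fun i ↦ ?_
  have hexact := (ShortComplex.ShortExact.moduleCat_exact_iff_function_exact S).1 hS.exact
  exact ModuleCat.shortComplex_shortExact _
    (rTensor_exact (Q.complex.X i) hexact hS.moduleCat_surjective_g)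
    (Module.Flat.rTensor_preserves_injective_linearMap S.f.hom hS.moduleCat_injective_f)
    (LinearMap.rTensor_surjective (Q.complex.X i) hS.moduleCat_surjective_g)

lemma torFunctor_exact : Function.Exact ((torFunctor Q h).map S.f) ((torFunctor Q h).map S.g) :=
  (ShortComplex.ShortExact.moduleCat_exact_iff_function_exact _).1
    ((shortExact_map_tensorComplex Q hS).homology_exact₂ h)

lemma exists_torFunctor_connecting :
    ∃ δ : (torFunctor Q (h + 1)).obj S.X₃ →ₗ[R] (torFunctor Q h).obj S.X₁,
      Function.Exact ((torFunctor Q (h + 1)).map S.g) δ ∧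
        Function.Exact δ ((torFunctor Q h).map S.f) :=
  have hT := shortExact_map_tensorComplex Q hS
  ⟨(hT.δ (h + 1) h rfl).hom,
    (ShortComplex.ShortExact.moduleCat_exact_iff_function_exact _).1
      (hT.homology_exact₃ (h + 1) h rfl),
    (ShortComplex.ShortExact.moduleCat_exact_iff_function_exact _).1
      (hT.homology_exact₁ (h + 1) h rfl)⟩

lemma torFunctor_zero_map_surjective : Function.Surjective ((torFunctor Q 0).map S.g) := by
  let φ := (tensorComplex Q.complex).map S.g
  have hφ : Epi (φ.f 0) :=
    (ModuleCat.epi_iff_surjective _).2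
      (LinearMap.rTensor_surjective (Q.complex.X 0) hS.moduleCat_surjective_g)
  have hopcycles : Epi (HomologicalComplex.homologyMap φ 0) := by
    have := ChainComplex.isoHomologyι₀_inv_naturality φ
    rw [Iso.inv_comp_eq] at this
    rw [this]
    infer_instance
  exact (ModuleCat.epi_iff_surjective _).1 hopcycles

end LongExactSequence

end TorFunctor

section TorTrivial

variable {R : Type u} [CommRing R] {N : ModuleCat.{u} R} (Q : ProjectiveResolution N)

/-- The length of `Tor_h(M, N)`; if `N` is the residue field of a graded or local ring, this is the
`h`-th Betti number of `M`. -/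
noncomputable def torLength (h : ℕ) (M : ModuleCat.{u} R) : ℕ∞ :=
  Module.length R ((torFunctor Q h).obj M)

/-- `φ` induces the zero map on every `Tor_h(-, N)`. If `N` is the residue field, then the mapping
cone of a lift of `φ` to minimal free resolutions is again minimal. -/
def TorTrivial {M M' : ModuleCat.{u} R} (φ : M ⟶ M') : Prop :=
  ∀ h, (torFunctor Q h).map φ = 0

variable {Q}

lemma TorTrivial.comp {M M' M'' : ModuleCat.{u} R} {φ : M ⟶ M'} (hφ : TorTrivial Q φ)
    (ψ : M' ⟶ M'') : TorTrivial Q (φ ≫ ψ) := fun h ↦ by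
  rw [Functor.map_comp, hφ, Limits.zero_comp]

lemma TorTrivial.of_comp_eq_zero {M M' M'' : ModuleCat.{u} R} {φ : M ⟶ M'} {ψ : M' ⟶ M''}
    (hψ : ∀ h, Function.Injective ((torFunctor Q h).map ψ)) (hφ : φ ≫ ψ = 0) :
    TorTrivial Q φ := fun h ↦ by
  have := (ModuleCat.mono_iff_injective _).2 (hψ h)
  rw [← cancel_mono ((torFunctor Q h).map ψ), ← Functor.map_comp, hφ, Functor.map_zero,
    Limits.zero_comp]

lemma torLength_congr {M M' : ModuleCat.{u} R} (e : M ≅ M') (h : ℕ) :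
    torLength Q h M = torLength Q h M' :=
  ((torFunctor Q h).mapIso e).toLinearEquiv.length_eq

section ShortExact

variable {S : ShortComplex (ModuleCat.{u} R)} (hS : S.ShortExact) (hf : TorTrivial Q S.f)
include hS hf

lemma TorTrivial.map_g_injective (h : ℕ) : Function.Injective ((torFunctor Q h).map S.g) := by
  rw [injective_iff_map_eq_zero]
  intro x hx
  obtain ⟨y, rfl⟩ := (torFunctor_exact Q h hS x).1 hx
  rw [hf h]
  rfl

lemma TorTrivial.torLength_zero : torLength Q 0 S.X₃ = torLength Q 0 S.X₂ :=
  (LinearEquiv.ofBijective ((torFunctor Q 0).map S.g).hom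
    ⟨hf.map_g_injective hS 0, torFunctor_zero_map_surjective Q hS⟩).length_eq.symm

lemma TorTrivial.torLength_succ (h : ℕ) :
    torLength Q (h + 1) S.X₃ = torLength Q (h + 1) S.X₂ + torLength Q h S.X₁ := by
  obtain ⟨δ, hgδ, hδf⟩ := exists_torFunctor_connecting Q h hS
  refine Module.length_eq_add_of_exact ((torFunctor Q (h + 1)).map S.g).hom δ
    (hf.map_g_injective hS (h + 1)) (fun y ↦ (hδf y).1 ?_) hgδ
  rw [hf h]
  rfl

variable {P C : ModuleCat.{u} R} {ψ : P ⟶ S.X₃} {π : S.X₃ ⟶ C} {hψπ : ψ ≫ π = 0}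
  (hT : (ShortComplex.mk ψ π hψπ).ShortExact) (hψ : TorTrivial Q ψ)
include hT hψ

lemma TorTrivial.map_g_comp_injective (h : ℕ) :
    Function.Injective ((torFunctor Q h).map (S.g ≫ π)) := by
  rw [Functor.map_comp]
  exact (hψ.map_g_injective hT h).comp (hf.map_g_injective hS h)

lemma TorTrivial.torLength_eq_add {M : ModuleCat.{u} R} {φ : M ⟶ S.X₂} {hφ : φ ≫ S.g ≫ π = 0}
    (hφS : (ShortComplex.mk φ _ hφ).ShortExact) {h : ℕ} (htop : torLength Q (h + 1) S.X₂ ≠ ⊤) :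
    torLength Q h M = torLength Q h S.X₁ + torLength Q h P := by
  have hφtriv : TorTrivial Q φ := .of_comp_eq_zero (hf.map_g_comp_injective hS hT hψ) hφ
  refine ENat.add_right_injective_of_ne_top htop ?_
  calc torLength Q (h + 1) S.X₂ + torLength Q h M
    _ = torLength Q (h + 1) C := (hφtriv.torLength_succ hφS h).symm
    _ = torLength Q (h + 1) S.X₃ + torLength Q h P := hψ.torLength_succ hT h
    _ = torLength Q (h + 1) S.X₂ + (torLength Q h S.X₁ + torLength Q h P) := by
        rw [hf.torLength_succ hS, add_assoc]

end ShortExact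

section Submodule

open Pointwise

variable {X : Type u} [AddCommGroup X] [Module R X] {A B : Submodule R X}

/-- The inclusion `A ⟶ B` in the category of modules. -/
def inclusionHom (hAB : A ≤ B) : ModuleCat.of R A ⟶ ModuleCat.of R B :=
  ModuleCat.ofHom (Submodule.inclusion hAB)

/-- The short complex `A ⟶ B ⟶ B ⧸ A`. -/
def inclusionShortComplex (hAB : A ≤ B) : ShortComplex (ModuleCat.{u} R) where
  f := inclusionHom hAB
  g := ModuleCat.ofHom (A.submoduleOf B).mkQ
  zero := by
    ext x
    exact (Submodule.Quotient.mk_eq_zero _).2 x.2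

lemma inclusionShortComplex_shortExact (hAB : A ≤ B) : (inclusionShortComplex hAB).ShortExact :=
  ModuleCat.shortComplex_shortExact _
    (LinearMap.exact_iff.2 ((Submodule.ker_mkQ _).trans (Submodule.range_inclusion A B hAB).symm))
    (Submodule.inclusion_injective hAB) (Submodule.mkQ_surjective _)

lemma sup_smul_le (hAB : A ≤ B) (g : R) : A ⊔ g • B ≤ B :=
  sup_le hAB (Submodule.smul_le_self_of_tower g B)

lemma exact_inclusion_sup_smul (hAB : A ≤ B) (g : R) :
    Function.Exact (Submodule.inclusion (sup_smul_le hAB g))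
      ((g • (⊤ : Submodule R (B ⧸ A.submoduleOf B))).mkQ ∘ₗ (A.submoduleOf B).mkQ) := by
  rw [LinearMap.exact_iff, LinearMap.ker_comp, Submodule.ker_mkQ, Submodule.range_inclusion]
  ext x
  rw [Submodule.mem_comap, Submodule.mem_smul_pointwise_iff_exists, Submodule.mem_comap,
    Submodule.mem_sup]
  constructor
  · rintro ⟨y, -, hy⟩
    obtain ⟨b, rfl⟩ := Submodule.mkQ_surjective _ y
    have hxb : x - g • b ∈ A.submoduleOf B := (Submodule.Quotient.eq _).1 hy.symm
    exact ⟨_, hxb, _, Submodule.smul_mem_pointwise_smul _ g _ b.2, sub_add_cancel _ _⟩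
  · rintro ⟨a, ha, c, hc, hx⟩
    obtain ⟨b, hb, rfl⟩ := (Submodule.mem_smul_pointwise_iff_exists _ _ _).1 hc
    refine ⟨(A.submoduleOf B).mkQ ⟨b, hb⟩, trivial, Eq.symm ?_⟩
    have hxa : x.1 - g • b = a := sub_eq_of_eq_add hx.symm
    exact (Submodule.Quotient.eq _).2 (hxa ▸ ha : x.1 - g • b ∈ A)

/-- The short complex `A + gB ⟶ B ⟶ (B ⧸ A) ⧸ g(B ⧸ A)`. -/
def supSMulShortComplex (hAB : A ≤ B) (g : R) : ShortComplex (ModuleCat.{u} R) where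
  f := inclusionHom (sup_smul_le hAB g)
  g := (inclusionShortComplex hAB).g ≫
    ModuleCat.ofHom (g • (⊤ : Submodule R (B ⧸ A.submoduleOf B))).mkQ
  zero := ModuleCat.hom_ext (exact_inclusion_sup_smul hAB g).linearMap_comp_eq_zero

lemma supSMulShortComplex_shortExact (hAB : A ≤ B) (g : R) :
    (supSMulShortComplex hAB g).ShortExact :=
  ModuleCat.shortComplex_shortExact _ (exact_inclusion_sup_smul hAB g)
    (Submodule.inclusion_injective (sup_smul_le hAB g))
    ((Submodule.mkQ_surjective _).comp (Submodule.mkQ_surjective _))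

section SMulRegular

variable {hAB : A ≤ B} (htriv : TorTrivial Q (inclusionHom hAB)) {g : R}
  (hN : ∀ x : N, g • x = 0) (hreg : IsSMulRegular (B ⧸ A.submoduleOf B) g)
include htriv hN hreg

lemma TorTrivial.inclusionHom_sup_smul : TorTrivial Q (inclusionHom (sup_smul_le hAB g)) :=
  .of_comp_eq_zero
    (TorTrivial.map_g_comp_injective (inclusionShortComplex_shortExact hAB) htriv
      hreg.smulShortComplex_shortExact fun h ↦ torFunctor_map_smul_id_eq_zero Q h hN _)
    (supSMulShortComplex hAB g).zero

lemma TorTrivial.torLength_sup_smul {h : ℕ} (htop : torLength Q (h + 1) (ModuleCat.of R B) ≠ ⊤) :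
    torLength Q h (ModuleCat.of R ↥(A ⊔ g • B)) =
      torLength Q h (ModuleCat.of R A) + torLength Q h (ModuleCat.of R (B ⧸ A.submoduleOf B)) :=
  TorTrivial.torLength_eq_add (inclusionShortComplex_shortExact hAB) htriv
    hreg.smulShortComplex_shortExact (fun h ↦ torFunctor_map_smul_id_eq_zero Q h hN _)
    (supSMulShortComplex_shortExact hAB g) htop

lemma TorTrivial.torLength_zero_sup_smul (htop : torLength Q 1 (ModuleCat.of R B) ≠ ⊤) :
    torLength Q 0 (ModuleCat.of R ↥(A ⊔ g • B)) =
      torLength Q 0 (ModuleCat.of R A) + torLength Q 0 (ModuleCat.of R B) := by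
  have hquot : torLength Q 0 (ModuleCat.of R (B ⧸ A.submoduleOf B)) =
      torLength Q 0 (ModuleCat.of R B) :=
    TorTrivial.torLength_zero (S := inclusionShortComplex hAB)
      (inclusionShortComplex_shortExact hAB) htriv
  rw [htriv.torLength_sup_smul hN hreg htop, hquot]

lemma TorTrivial.torLength_succ_sup_smul {h : ℕ}
    (htop : torLength Q (h + 2) (ModuleCat.of R B) ≠ ⊤) :
    torLength Q (h + 1) (ModuleCat.of R ↥(A ⊔ g • B)) =
      torLength Q (h + 1) (ModuleCat.of R A) +
        (torLength Q (h + 1) (ModuleCat.of R B) + torLength Q h (ModuleCat.of R A)) := by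
  have hquot : torLength Q (h + 1) (ModuleCat.of R (B ⧸ A.submoduleOf B)) =
      torLength Q (h + 1) (ModuleCat.of R B) + torLength Q h (ModuleCat.of R A) :=
    TorTrivial.torLength_succ (S := inclusionShortComplex hAB)
      (inclusionShortComplex_shortExact hAB) htriv h
  rw [htriv.torLength_sup_smul hN hreg htop, hquot]

end SMulRegular

end Submodule

end TorTrivial

section RegularFamily

open Pointwise

variable {R ι : Type*} [CommRing R]

/-- Each `f j` is a nonzerodivisor modulo the ideal generated by any set of other members of the
family `f`; in other words, any finite sequence of distinct members of `f` is weakly regular. -/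
def IsRegularFamily (f : ι → R) : Prop :=
  ∀ (s : Set ι), ∀ j ∉ s, ∀ x, f j * x ∈ Ideal.span (f '' s) → x ∈ Ideal.span (f '' s)

/-- The ideal generated by the products `f i * f j` with `i ≠ j` in `s`. -/
def pairProductIdeal (f : ι → R) (s : Set ι) : Ideal R :=
  Ideal.span ((fun p : ι × ι ↦ f p.1 * f p.2) '' s.offDiag)

variable {f : ι → R} {s : Set ι} {a : ι}

lemma span_image_empty_eq_bot (f : ι → R) : Ideal.span (f '' ∅) = ⊥ := by
  rw [Set.image_empty, Ideal.span_empty]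

lemma pairProductIdeal_empty (f : ι → R) : pairProductIdeal f ∅ = ⊥ := by
  rw [pairProductIdeal, Set.offDiag_empty, Set.image_empty, Ideal.span_empty]

lemma span_image_insert_eq_sup_smul_top (f : ι → R) (s : Set ι) (a : ι) :
    Ideal.span (f '' insert a s) = Ideal.span (f '' s) ⊔ f a • ⊤ := by
  rw [Set.image_insert_eq, Ideal.span_insert, sup_comm, ← Submodule.ideal_span_singleton_smul,
    Ideal.smul_top_eq_map, Algebra.algebraMap_self, Ideal.map_id]
  rfl

lemma pairProductIdeal_insert (ha : a ∉ s) :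
    pairProductIdeal f (insert a s) = pairProductIdeal f s ⊔ f a • Ideal.span (f '' s) := by
  have hleft : (fun p : ι × ι ↦ f p.1 * f p.2) '' {a} ×ˢ s = f a • f '' s := by
    ext x
    simp [Set.mem_smul_set]
  have hright : (fun p : ι × ι ↦ f p.1 * f p.2) '' s ×ˢ {a} = f a • f '' s := by
    ext x
    simp [Set.mem_smul_set, mul_comm]
  rw [pairProductIdeal, Set.offDiag_insert ha, Set.image_union, Set.image_union, hleft, hright,
    Set.union_assoc, Set.union_self, Ideal.span_union, pairProductIdeal]
  exact congrArg _ (Submodule.span_smul (f a) (f '' s))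

lemma mul_mem_pairProductIdeal {i : ι} (hi : i ∈ s) {x : R}
    (hx : x ∈ Ideal.span (f '' (s \ {i}))) : f i * x ∈ pairProductIdeal f s := by
  induction hx using Submodule.span_induction with
  | mem y hy =>
    obtain ⟨j, ⟨hj, hji⟩, rfl⟩ := hy
    exact Ideal.subset_span ⟨(i, j), ⟨hi, hj, Ne.symm hji⟩, rfl⟩
  | zero => simp
  | add y z _ _ hy hz => rw [mul_add]; exact add_mem hy hz
  | smul r y _ hy => rw [smul_eq_mul, mul_left_comm]; exact Ideal.mul_mem_left _ r hy

lemma pairProductIdeal_le_span_image_diff_singleton (f : ι → R) (s : Set ι) (i : ι) :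
    pairProductIdeal f s ≤ Ideal.span (f '' (s \ {i})) := by
  refine Ideal.span_le.2 ?_
  rintro _ ⟨⟨j, k⟩, ⟨hj, hk, hjk⟩, rfl⟩
  by_cases hji : j = i
  · have hki : k ≠ i := fun hki ↦ hjk (hji.trans hki.symm)
    exact Ideal.mul_mem_left _ _ (Ideal.subset_span ⟨k, ⟨hk, hki⟩, rfl⟩)
  · exact Ideal.mul_mem_right _ _ (Ideal.subset_span ⟨j, ⟨hj, hji⟩, rfl⟩)

lemma pairProductIdeal_le_span_image (f : ι → R) (s : Set ι) :
    pairProductIdeal f s ≤ Ideal.span (f '' s) := by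
  refine Ideal.span_le.2 ?_
  rintro _ ⟨⟨j, k⟩, ⟨hj, -⟩, rfl⟩
  exact Ideal.mul_mem_right _ _ (Ideal.subset_span ⟨j, hj, rfl⟩)

lemma IsRegularFamily.mem_pairProductIdeal (hf : IsRegularFamily f) {x : R}
    (hx : x ∈ Ideal.span (f '' s)) (hxs : ∀ i ∈ s, x ∈ Ideal.span (f '' (s \ {i}))) :
    x ∈ pairProductIdeal f s := by
  classical
  obtain ⟨l, hl, rfl⟩ := (Finsupp.mem_span_image_iff_linearCombination R).1 hx
  rw [Finsupp.linearCombination_apply, Finsupp.sum] at hxs ⊢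
  refine Ideal.sum_mem _ fun i hi ↦ ?_
  have his : i ∈ s := hl hi
  have hothers : ∑ j ∈ l.support \ {i}, l j • f j ∈ Ideal.span (f '' (s \ {i})) :=
    Ideal.sum_mem _ fun j hj ↦ by
      rw [Finset.mem_sdiff, Finset.mem_singleton] at hj
      exact Ideal.mul_mem_left _ _ (Ideal.subset_span ⟨j, ⟨hl hj.1, hj.2⟩, rfl⟩)
  have hi' : f i * l i ∈ Ideal.span (f '' (s \ {i})) := by
    have := hxs i his
    rw [← Finset.sum_sdiff (Finset.singleton_subset_iff.2 hi), Finset.sum_singleton,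
      Ideal.add_mem_iff_right _ hothers, smul_eq_mul, mul_comm] at this
    exact this
  rw [smul_eq_mul, mul_comm]
  exact mul_mem_pairProductIdeal his (hf _ i (fun h ↦ h.2 rfl) _ hi')

lemma IsRegularFamily.mem_pairProductIdeal_of_mul_mem (hf : IsRegularFamily f) (ha : a ∉ s) {x : R}
    (hx : x ∈ Ideal.span (f '' s)) (hax : f a * x ∈ pairProductIdeal f s) :
    x ∈ pairProductIdeal f s :=
  hf.mem_pairProductIdeal hx fun i _ ↦ hf _ a (fun h ↦ ha h.1) x
    (pairProductIdeal_le_span_image_diff_singleton f s i hax)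

lemma isSMulRegular_quotient_submoduleOf_iff {R X : Type*} [CommRing R] [AddCommGroup X]
    [Module R X] {A B : Submodule R X} {g : R} :
    IsSMulRegular (B ⧸ A.submoduleOf B) g ↔ ∀ x ∈ B, g • x ∈ A → x ∈ A := by
  rw [isSMulRegular_quotient_iff_mem_of_smul_mem]
  exact Subtype.forall

lemma IsRegularFamily.isSMulRegular_top_quotient_span (hf : IsRegularFamily f) (ha : a ∉ s) :
    IsSMulRegular ((⊤ : Ideal R) ⧸ (Ideal.span (f '' s)).submoduleOf ⊤) (f a) :=
  isSMulRegular_quotient_submoduleOf_iff.2 fun x _ ↦ hf s a ha x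

lemma IsRegularFamily.isSMulRegular_span_quotient_pairProductIdeal (hf : IsRegularFamily f)
    (ha : a ∉ s) : IsSMulRegular
      (Ideal.span (f '' s) ⧸ (pairProductIdeal f s).submoduleOf (Ideal.span (f '' s))) (f a) :=
  isSMulRegular_quotient_submoduleOf_iff.2 fun _ ↦ hf.mem_pairProductIdeal_of_mul_mem ha

end RegularFamily

section RegularFamilyTor

open Pointwise

variable {R : Type u} [CommRing R] {N : ModuleCat.{u} R} {Q : ProjectiveResolution N}

lemma TorTrivial.of_eq_bot {X : Type u} [AddCommGroup X] [Module R X] {A B : Submodule R X}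
    (hA : A = ⊥) (hAB : A ≤ B) : TorTrivial Q (inclusionHom hAB) := fun h ↦ by
  subst hA
  rw [(ModuleCat.isZero_of_subsingleton _).eq_zero_of_src (inclusionHom hAB), Functor.map_zero]

lemma torLength_of_eq_bot {X : Type u} [AddCommGroup X] [Module R X] {A : Submodule R X}
    (hA : A = ⊥) (h : ℕ) : torLength Q h (ModuleCat.of R A) = 0 := by
  subst hA
  exact Module.length_eq_zero_iff.2 <| ModuleCat.subsingleton_of_isZero <|
    (torFunctor Q h).map_isZero (ModuleCat.isZero_of_subsingleton _)

lemma torLength_zero_ring : torLength Q 0 (ModuleCat.of R R) = Module.length R N :=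
  let ⟨e⟩ := torFunctor_zero_ring Q
  e.toLinearEquiv.length_eq

lemma torLength_succ_ring (h : ℕ) : torLength Q (h + 1) (ModuleCat.of R R) = 0 :=
  Module.length_eq_zero_iff.2 (ModuleCat.subsingleton_of_isZero (isZero_torFunctor_succ_ring Q h))

lemma torLength_top (h : ℕ) :
    torLength Q h (ModuleCat.of R (⊤ : Ideal R)) = torLength Q h (ModuleCat.of R R) :=
  torLength_congr Submodule.topEquiv.toModuleIso h

lemma TorTrivial.torLength_succ_quotient {X : Type u} [AddCommGroup X] [Module R X]
    {A : Submodule R X} (hA : TorTrivial Q (ModuleCat.ofHom A.subtype)) (h : ℕ) :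
    torLength Q (h + 1) (ModuleCat.of R (X ⧸ A)) =
      torLength Q (h + 1) (ModuleCat.of R X) + torLength Q h (ModuleCat.of R A) :=
  let S : ShortComplex (ModuleCat.{u} R) :=
    .mk (ModuleCat.ofHom A.subtype) (ModuleCat.ofHom A.mkQ)
      (ModuleCat.hom_ext (LinearMap.exact_subtype_mkQ A).linearMap_comp_eq_zero)
  have hS : S.ShortExact := ModuleCat.shortComplex_shortExact S
    (LinearMap.exact_subtype_mkQ A) A.injective_subtype A.mkQ_surjective
  TorTrivial.torLength_succ (S := S) hS hA h

variable {ι : Type*} {f : ι → R} (hf : IsRegularFamily f) (hN : ∀ j, ∀ x : N, f j • x = 0)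
include hf hN

lemma IsRegularFamily.torTrivial_span_le_top (s : Finset ι) :
    TorTrivial Q (inclusionHom (le_top : Ideal.span (f '' s) ≤ ⊤)) := by
  induction s using Finset.cons_induction with
  | empty =>
    rw [Finset.coe_empty]
    exact .of_eq_bot (span_image_empty_eq_bot f) le_top
  | cons a s ha ih =>
    rw [Finset.coe_cons, span_image_insert_eq_sup_smul_top]
    exact ih.inclusionHom_sup_smul (hN a)
      (hf.isSMulRegular_top_quotient_span ha)

lemma IsRegularFamily.torTrivial_pairProductIdeal_le_span (s : Finset ι) :
    ∀ hle : pairProductIdeal f s ≤ Ideal.span (f '' s), TorTrivial Q (inclusionHom hle) := by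
  induction s using Finset.cons_induction with
  | empty =>
    rw [Finset.coe_empty]
    exact .of_eq_bot (pairProductIdeal_empty f)
  | cons a s ha ih =>
    rw [Finset.coe_cons, span_image_insert_eq_sup_smul_top, pairProductIdeal_insert ha]
    intro _
    have htriv := (ih (pairProductIdeal_le_span_image f s)).inclusionHom_sup_smul (hN a)
      (hf.isSMulRegular_span_quotient_pairProductIdeal ha)
    exact htriv.comp (inclusionHom le_sup_left)

lemma IsRegularFamily.torLength_span (s : Finset ι) (h : ℕ) :
    torLength Q h (ModuleCat.of R (Ideal.span (f '' s))) =
      (s.card.choose (h + 1) : ℕ) * Module.length R N := by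
  induction s using Finset.cons_induction generalizing h with
  | empty =>
    rw [Finset.coe_empty, torLength_of_eq_bot (span_image_empty_eq_bot f), Finset.card_empty,
      Nat.choose_zero_succ, Nat.cast_zero, zero_mul]
  | cons a s ha ih =>
    have htriv := hf.torTrivial_span_le_top (Q := Q) hN s
    have hreg := hf.isSMulRegular_top_quotient_span (a := a) ha
    have htop (h : ℕ) : torLength Q (h + 1) (ModuleCat.of R (⊤ : Ideal R)) = 0 :=
      (torLength_top _).trans (torLength_succ_ring h)
    rw [Finset.coe_cons, span_image_insert_eq_sup_smul_top, Finset.card_cons]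
    cases h with
    | zero =>
      rw [htriv.torLength_zero_sup_smul (hN a) hreg (by simp [htop 0]), ih, torLength_top,
        torLength_zero_ring, Nat.choose_one_right, Nat.choose_one_right]
      push_cast
      ring
    | succ h =>
      rw [htriv.torLength_succ_sup_smul (hN a) hreg (by simp [htop (h + 1)]), ih, ih, htop,
        Nat.choose_succ_succ' s.card]
      push_cast
      ring

variable (hlen : Module.length R N ≠ ⊤)
include hlen

lemma IsRegularFamily.torLength_pairProductIdeal (s : Finset ι) (h : ℕ) :
    torLength Q h (ModuleCat.of R (pairProductIdeal f s)) =
      ((h + 1) * s.card.choose (h + 2) : ℕ) * Module.length R N := by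
  induction s using Finset.cons_induction generalizing h with
  | empty =>
    rw [Finset.coe_empty, torLength_of_eq_bot (pairProductIdeal_empty f), Finset.card_empty,
      Nat.choose_zero_succ, mul_zero, Nat.cast_zero, zero_mul]
  | cons a s ha ih =>
    have htriv := hf.torTrivial_pairProductIdeal_le_span (Q := Q) hN s
      (pairProductIdeal_le_span_image f s)
    have hreg := hf.isSMulRegular_span_quotient_pairProductIdeal (a := a) ha
    have hspan (h : ℕ) := hf.torLength_span (Q := Q) hN s h
    have htop (h : ℕ) : torLength Q h (ModuleCat.of R (Ideal.span (f '' s))) ≠ ⊤ := by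
      rw [hspan]
      exact WithTop.mul_ne_top (ENat.natCast_ne_top _) hlen
    rw [Finset.coe_cons, pairProductIdeal_insert ha, Finset.card_cons]
    cases h with
    | zero =>
      rw [htriv.torLength_zero_sup_smul (hN a) hreg (htop 1), ih, hspan,
        Nat.choose_succ_succ' s.card]
      push_cast
      ring
    | succ h =>
      rw [htriv.torLength_succ_sup_smul (hN a) hreg (htop (h + 2)), ih, ih, hspan,
        Nat.choose_succ_succ' s.card]
      push_cast
      ring

theorem IsRegularFamily.torLength_quotient_pairProductIdeal (s : Finset ι) (h : ℕ) :
    torLength Q (h + 1) (ModuleCat.of R (R ⧸ pairProductIdeal f s)) =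
      ((h + 1) * s.card.choose (h + 2) : ℕ) * Module.length R N := by
  have htriv : TorTrivial Q (ModuleCat.ofHom (pairProductIdeal f s).subtype) :=
    (hf.torTrivial_pairProductIdeal_le_span hN s (pairProductIdeal_le_span_image f s)).comp
      (ModuleCat.ofHom (Ideal.span (f '' s)).subtype)
  rw [htriv.torLength_succ_quotient, torLength_succ_ring, zero_add,
    hf.torLength_pairProductIdeal hN hlen]

end RegularFamilyTor

section Products

variable {R ι : Type*} [CommRing R] {f : ι → R}

lemma mem_span_insert_mul {T : Set R} {g h r : R}
    (hgT : ∀ x, g * x ∈ Ideal.span T → x ∈ Ideal.span T)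
    (hrg : ∀ x, r * x ∈ Ideal.span (insert g T) → x ∈ Ideal.span (insert g T))
    (hrh : ∀ x, r * x ∈ Ideal.span (insert h T) → x ∈ Ideal.span (insert h T))
    {x : R} (hx : r * x ∈ Ideal.span (insert (g * h) T)) :
    x ∈ Ideal.span (insert (g * h) T) := by
  obtain ⟨a, t, ht, hrx⟩ := Ideal.mem_span_insert.1 hx
  obtain ⟨b, u, hu, rfl⟩ := Ideal.mem_span_insert.1 <| hrg x <|
    Ideal.mem_span_insert.2 ⟨a * h, t, ht, by rw [hrx]; ring⟩
  have hrb : r * b - a * h ∈ Ideal.span T := by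
    refine hgT _ ?_
    have heq : g * (r * b - a * h) = t - r * u := by linear_combination hrx
    exact heq ▸ sub_mem ht (Ideal.mul_mem_left _ r hu)
  obtain ⟨d, v, hv, rfl⟩ := Ideal.mem_span_insert.1 <| hrh b <|
    Ideal.mem_span_insert.2 ⟨a, _, hrb, by ring⟩
  exact Ideal.mem_span_insert.2
    ⟨d, v * g + u, add_mem (Ideal.mul_mem_right _ _ hv) hu, by ring⟩

lemma image_update_of_notMem {α : Type*} [DecidableEq ι] {s : Set ι} {b : ι} (hb : b ∉ s)
    (f : ι → α) (g : α) : Function.update f b g '' s = f '' s :=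
  Set.image_congr fun _ hj ↦ Function.update_of_ne (ne_of_mem_of_not_mem hj hb) _ _

lemma image_update_insert {α : Type*} [DecidableEq ι] {s : Set ι} {b : ι} (hb : b ∉ s)
    (f : ι → α) (g : α) : Function.update f b g '' insert b s = insert g (f '' s) := by
  rw [Set.image_insert_eq, Function.update_self, image_update_of_notMem hb]

lemma IsRegularFamily.update_mul [DecidableEq ι] {b : ι} {g h : R}
    (hg : IsRegularFamily (Function.update f b g)) (hh : IsRegularFamily (Function.update f b h)) :
    IsRegularFamily (Function.update f b (g * h)) := by
  have hself {t : Set ι} (hb : b ∉ t) {y : R} (hy : IsRegularFamily (Function.update f b y)) (x : R)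
      (hx : y * x ∈ Ideal.span (f '' t)) : x ∈ Ideal.span (f '' t) := by
    have := hy t b hb x
    rw [image_update_of_notMem hb, Function.update_self] at this
    exact this hx
  intro s j hj x hx
  by_cases hbs : b ∈ s
  · have hjb : j ≠ b := fun h ↦ hj (h ▸ hbs)
    obtain ⟨t, hbt, rfl⟩ : ∃ t, b ∉ t ∧ insert b t = s := ⟨s \ {b}, by simp, by simp [hbs]⟩
    have hother {y : R} (hy : IsRegularFamily (Function.update f b y)) (x : R)
        (hx : f j * x ∈ Ideal.span (insert y (f '' t))) : x ∈ Ideal.span (insert y (f '' t)) := by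
      have := hy (insert b t) j hj x
      rw [image_update_insert hbt, Function.update_of_ne hjb] at this
      exact this hx
    rw [image_update_insert hbt, Function.update_of_ne hjb] at hx
    rw [image_update_insert hbt]
    exact mem_span_insert_mul (hself hbt hg) (hother hg) (hother hh) hx
  · rw [image_update_of_notMem hbs] at hx ⊢
    rcases eq_or_ne j b with rfl | hjb
    · rw [Function.update_self, mul_assoc] at hx
      exact hself hbs hh _ (hself hbs hg _ hx)
    · rw [Function.update_of_ne hjb] at hx
      have := hg s j hj x
      rw [image_update_of_notMem hbs, Function.update_of_ne hjb] at this
      exact this hx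

lemma IsRegularFamily.prod [Finite ι] {κ : ι → Type*} [∀ j, Fintype (κ j)] [∀ j, Nonempty (κ j)]
    {L : (j : ι) → κ j → R}
    (hL : ∀ c : (j : ι) → κ j, IsRegularFamily fun j ↦ L j (c j)) :
    IsRegularFamily fun j ↦ ∏ k, L j k := by
  classical
  cases nonempty_fintype ι
  suffices hmixed : ∀ (s : Finset ι) (c : (j : ι) → κ j),
      IsRegularFamily (s.piecewise (fun j ↦ ∏ k, L j k) fun j ↦ L j (c j)) by
    simpa only [Finset.piecewise_univ] using hmixed Finset.univ fun _ ↦ Classical.arbitrary _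
  intro s
  induction s using Finset.cons_induction with
  | empty => simpa only [Finset.piecewise_empty] using hL
  | cons a s ha ih =>
    intro c
    rw [Finset.cons_eq_insert, Finset.piecewise_insert]
    refine Finset.prod_induction_nonempty _ (fun y ↦ IsRegularFamily (Function.update _ a y))
      (fun _ _ ↦ IsRegularFamily.update_mul) Finset.univ_nonempty fun k _ ↦ ?_
    have hc : (fun j ↦ L j (Function.update c a k j)) =
        Function.update (fun j ↦ L j (c j)) a (L a k) :=
      funext fun j ↦ Function.apply_update L c a k j
    rw [Finset.update_piecewise_of_notMem _ _ _ ha, ← hc]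
    exact ih _

lemma IsRegularFamily.comp_injective {ι' : Type*} (hf : IsRegularFamily f) {e : ι' → ι}
    (he : Function.Injective e) : IsRegularFamily (f ∘ e) := by
  intro s j hj x
  rw [Set.image_comp]
  exact hf (e '' s) (e j) (he.mem_set_image.not.2 hj) x

lemma IsRegularFamily.map_equiv {R' : Type*} [CommRing R'] (hf : IsRegularFamily f) (e : R ≃+* R') :
    IsRegularFamily (e ∘ f) := by
  intro s j hj x hx
  obtain ⟨x, rfl⟩ := e.surjective x
  have hspan : Ideal.span ((e ∘ f) '' s) = (Ideal.span (f '' s)).map e := by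
    rw [Set.image_comp, Ideal.map_span]
  rw [hspan, Function.comp_apply, ← map_mul, Ideal.apply_mem_of_equiv_iff] at hx
  rw [hspan, Ideal.apply_mem_of_equiv_iff]
  exact hf s j hj x hx

end Products

section LinearForms

variable {K σ : Type*} [Field K]

lemma isRegularFamily_X {R : Type*} [CommRing R] : IsRegularFamily (X : σ → MvPolynomial σ R) := by
  intro s j hj p hp
  rw [mem_ideal_span_X_image] at hp ⊢
  intro m hm
  rw [mem_support_iff, ← coeff_X_mul m j, ← mem_support_iff] at hm
  obtain ⟨i, hi, hmi⟩ := hp _ hm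
  have hji : j ≠ i := fun h ↦ hj (h ▸ hi)
  rw [Finsupp.add_apply, Finsupp.single_eq_of_ne' hji, zero_add] at hmi
  exact ⟨i, hi, hmi⟩

lemma exists_algEquiv_X_eq_basis {R τ : Type*} [CommRing R]
    (b : Module.Basis τ R (Submodule.span R (Set.range (X : σ → MvPolynomial σ R)))) :
    ∃ e : MvPolynomial τ R ≃ₐ[R] MvPolynomial σ R, ∀ t, e (X t) = b t := by
  let bX := Module.Basis.span (linearIndependent_X σ R)
  let eX := SymmetricAlgebra.equivMvPolynomial bX
  have heX : eX.toLinearMap ∘ₗ SymmetricAlgebra.ι R _ = Submodule.subtype _ :=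
    bX.ext fun i ↦ (SymmetricAlgebra.equivMvPolynomial_ι_apply bX i).trans
      (Module.Basis.coe_span_apply _ i).symm
  refine ⟨(SymmetricAlgebra.equivMvPolynomial b).symm.trans eX, fun t ↦ ?_⟩
  rw [AlgEquiv.trans_apply, SymmetricAlgebra.equivMvPolynomial_symm_X]
  exact LinearMap.congr_fun heX (b t)

lemma exists_basis_coe_comp_eq {V ι : Type*} [AddCommGroup V] [Module K V] {v : ι → V}
    (hv : LinearIndependent K v) {W : Submodule K V} (hvW : ∀ j, v j ∈ W) :
    ∃ (τ : Set W) (b : Module.Basis τ K W) (c : ι → τ), ∀ j, (b (c j) : V) = v j :=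
  have hvW' : LinearIndependent K fun j ↦ (⟨v j, hvW j⟩ : W) := .of_comp W.subtype hv
  ⟨_, .extend hvW'.linearIndepOn_id,
    fun j ↦ ⟨_, Module.Basis.subset_extend hvW'.linearIndepOn_id ⟨j, rfl⟩⟩,
    fun _ ↦ congrArg Subtype.val (Module.Basis.extend_apply_self _ _)⟩

lemma isRegularFamily_of_linearIndependent {ι : Type*} {M : ι → MvPolynomial σ K}
    (hM : ∀ j, (M j).IsHomogeneous 1) (hli : LinearIndependent K M) : IsRegularFamily M := by
  obtain ⟨τ, b, c, hb⟩ := exists_basis_coe_comp_eq hli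
    fun j ↦ (homogeneousSubmodule_one_eq_span_X (σ := σ) (R := K)).le (hM j)
  obtain ⟨e, he⟩ := exists_algEquiv_X_eq_basis b
  have hc : ⇑e ∘ X ∘ c = M := funext fun j ↦ (he (c j)).trans (hb j)
  have hc_injective : Function.Injective c := by
    rw [← hc] at hli
    exact hli.injective.of_comp.of_comp
  rw [← hc]
  exact (isRegularFamily_X.comp_injective hc_injective).map_equiv e.toRingEquiv

end LinearForms

section Dimension

lemma mem_idealOfVars_iff_constantCoeff_eq_zero {R σ : Type*} [CommRing R] {p : MvPolynomial σ R} :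
    p ∈ idealOfVars σ R ↔ constantCoeff p = 0 := by
  rw [← pow_one (idealOfVars σ R), mem_pow_idealOfVars_iff']
  simp only [Nat.lt_one_iff, Finsupp.degree_eq_zero_iff, forall_eq, constantCoeff_eq]

lemma algebraMap_quotient_idealOfVars_surjective (R σ : Type*) [CommRing R] :
    Function.Surjective (algebraMap R (MvPolynomial σ R ⧸ idealOfVars σ R)) := by
  intro y
  obtain ⟨p, rfl⟩ := Ideal.Quotient.mk_surjective y
  refine ⟨constantCoeff p, (Ideal.Quotient.eq (x := C (constantCoeff p))).2 ?_⟩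
  rw [mem_idealOfVars_iff_constantCoeff_eq_zero, map_sub, constantCoeff_C, sub_self]

lemma length_quotient_idealOfVars (K σ : Type*) [Field K] :
    Module.length (MvPolynomial σ K) (MvPolynomial σ K ⧸ idealOfVars σ K) = 1 := by
  have hker : idealOfVars σ K = RingHom.ker (constantCoeff (R := K) (σ := σ)) :=
    Ideal.ext fun p ↦ mem_idealOfVars_iff_constantCoeff_eq_zero
  rw [Module.length_eq_one_iff, isSimpleModule_iff_isCoatom, ← Ideal.isMaximal_def, hker]
  exact RingHom.ker_isMaximal_of_surjective _ fun a ↦ ⟨C a, constantCoeff_C σ a⟩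

lemma mem_idealOfVars_of_isHomogeneous_one {R σ : Type*} [CommRing R] {p : MvPolynomial σ R}
    (hp : p.IsHomogeneous 1) : p ∈ idealOfVars σ R := by
  rw [mem_idealOfVars_iff_constantCoeff_eq_zero, constantCoeff_eq]
  exact hp.coeff_eq_zero (by rw [map_zero]; exact zero_ne_one)

lemma smul_quotient_eq_zero {R : Type*} [CommRing R] {I : Ideal R} {g : R} (hg : g ∈ I)
    (x : R ⧸ I) : g • x = 0 := by
  obtain ⟨y, rfl⟩ := Ideal.Quotient.mk_surjective x
  exact Ideal.Quotient.eq_zero_iff_mem.2 (Ideal.mul_mem_right y I hg)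

lemma rank_eq_of_length_eq {K R M : Type*} [Field K] [CommRing R] [Algebra K R]
    [AddCommGroup M] [Module R M] [Module K M] [IsScalarTower K R M] {I : Ideal R}
    (hI : ∀ g ∈ I, ∀ x : M, g • x = 0) (hK : Function.Surjective (algebraMap K (R ⧸ I))) {d : ℕ}
    (hd : Module.length R M = d) : Module.rank K M = d := by
  let : Module (R ⧸ I) M := Module.IsTorsionBySet.module fun x g ↦ hI g g.2 x
  have : IsScalarTower R (R ⧸ I) M := Module.IsTorsionBySet.isScalarTower (S := R) _
  have : IsScalarTower K (R ⧸ I) M := Module.IsTorsionBySet.isScalarTower (S := K) _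
  rw [Module.length_eq_of_surjective (R := R ⧸ I) Ideal.Quotient.mk_surjective,
    ← Module.length_eq_of_surjective (S := K) hK, Module.length_eq_rank] at hd
  exact Cardinal.toENat_eq_natCast.1 hd

variable (K : Type) [Field K] {m : ℕ} {I : Ideal (MvPolynomial (Fin m) K)} {h : ℕ}
  {Q : ProjectiveResolution (ModuleCat.of (MvPolynomial (Fin m) K)
    (MvPolynomial (Fin m) K ⧸ idealOfVars (Fin m) K))}

lemma kdim_torModule_eq_of_torLength_eq {d : ℕ}
    (hd : torLength Q h (ModuleCat.of _ (MvPolynomial (Fin m) K ⧸ I)) = d) :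
    kdim K _ (torModule K m I h) = d := by
  let e : torModule K m I h ≅ (torFunctor Q h).obj (ModuleCat.of _ _) := torIso Q h _
  let : Module K (torModule K m I h) :=
    Module.compHom _ (algebraMap K (MvPolynomial (Fin m) K))
  have : IsScalarTower K (MvPolynomial (Fin m) K) (torModule K m I h) :=
    ⟨fun a b x ↦ by
      rw [Algebra.smul_def, mul_smul]
      rfl⟩
  refine rank_eq_of_length_eq (fun g hg x ↦ e.toLinearEquiv.injective ?_)
    (algebraMap_quotient_idealOfVars_surjective K (Fin m)) (e.toLinearEquiv.length_eq.trans hd)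
  rw [map_smul, map_zero]
  exact torFunctor_smul_eq_zero Q h (smul_quotient_eq_zero hg) _

lemma subsingleton_torModule_of_torLength_eq_zero
    (hzero : torLength Q h (ModuleCat.of _ (MvPolynomial (Fin m) K ⧸ I)) = 0) :
    Subsingleton (torModule K m I h) :=
  let e : torModule K m I h ≅ (torFunctor Q h).obj (ModuleCat.of _ _) := torIso Q h _
  Module.length_eq_zero_iff.1 (e.toLinearEquiv.length_eq.trans hzero)

end Dimension

lemma pairProductIdeal_univ_eq_span {R ι : Type*} [CommRing R] [LinearOrder ι] (f : ι → R) :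
    pairProductIdeal f Set.univ = Ideal.span {g | ∃ i j : ι, i < j ∧ g = f i * f j} := by
  refine congrArg Ideal.span (Set.ext fun g ↦ ⟨?_, ?_⟩)
  · rintro ⟨⟨i, j⟩, ⟨-, -, hij⟩, rfl⟩
    rcases lt_or_gt_of_ne hij with hlt | hgt
    · exact ⟨i, j, hlt, rfl⟩
    · exact ⟨j, i, hgt, mul_comm _ _⟩
  · rintro ⟨i, j, hij, rfl⟩
    exact ⟨(i, j), ⟨trivial, trivial, hij.ne⟩, rfl⟩

theorem betti_numbers_of_complete_grid_or_pseudo_grid_general (K : Type) [Field K] (m n : ℕ)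
    {κ : Fin n → Type*} [∀ j, Fintype (κ j)] [∀ j, Nonempty (κ j)]
    (L : (j : Fin n) → κ j → MvPolynomial (Fin m) K) (hLhom : ∀ j i, (L j i).IsHomogeneous 1)
    (hα : ∀ c : (j : Fin n) → κ j, LinearIndependent K fun j ↦ L j (c j))
    (f : Fin n → MvPolynomial (Fin m) K) (hf : ∀ j, f j = ∏ i, L j i) (h : ℕ) :
    kdim K (MvPolynomial (Fin m) K)
        (torModule K m (Ideal.span {g | ∃ i j : Fin n, i < j ∧ g = f i * f j}) (h + 1)) =
      ((h + 1) * n.choose (h + 2) : ℕ) ∧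
    (n ≤ h + 1 → Subsingleton
      (torModule K m (Ideal.span {g | ∃ i j : Fin n, i < j ∧ g = f i * f j}) (h + 1))) := by
  have hreg : IsRegularFamily f := by
    rw [funext hf]
    exact .prod fun c ↦ isRegularFamily_of_linearIndependent (fun j ↦ hLhom j (c j)) (hα c)
  have hmem (j : Fin n) : f j ∈ idealOfVars (Fin m) K :=
    Ideal.mem_of_dvd _ (hf j ▸ Finset.dvd_prod_of_mem _ (Finset.mem_univ (Classical.arbitrary _)))
      (mem_idealOfVars_of_isHomogeneous_one (hLhom j _))
  let N := ModuleCat.of (MvPolynomial (Fin m) K) (MvPolynomial (Fin m) K ⧸ idealOfVars (Fin m) K)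
  have hN (j : Fin n) (x : N) : f j • x = 0 := smul_quotient_eq_zero (hmem j) x
  have htor : torLength (ProjectiveResolution.of N) (h + 1) (ModuleCat.of _ (_ ⧸ Ideal.span
      {g | ∃ i j : Fin n, i < j ∧ g = f i * f j})) = ((h + 1) * n.choose (h + 2) : ℕ) := by
    have hlength : Module.length (MvPolynomial (Fin m) K) N = 1 := length_quotient_idealOfVars K _
    rw [← pairProductIdeal_univ_eq_span, ← Finset.coe_univ,
      hreg.torLength_quotient_pairProductIdeal hN (hlength ▸ ENat.one_ne_top), hlength, mul_one,
      Finset.card_univ, Fintype.card_fin]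
  refine ⟨kdim_torModule_eq_of_torLength_eq K htor, fun hn ↦ ?_⟩
  refine subsingleton_torModule_of_torLength_eq_zero K (htor.trans ?_)
  rw [Nat.choose_eq_zero_of_lt (by lia), mul_zero, Nat.cast_zero]

/-- For linear forms `L j i` in `R = K[x_0,…,x_n]` satisfying condition
(α), with `f j = ∏ i, L j i` and `I = (f_i f_j : i < j)` the defining ideal of a complete
grid or pseudo-grid of lines of type `(ℓ_1,…,ℓ_n)`, one has, for `0 ≤ h ≤ n-2`,
`dim_K Tor_{h+1}^R(R/I, R/(x_0,…,x_n)) = (h+1)·C(n,h+2)`, and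
`Tor_j^R(R/I, R/(x_0,…,x_n)) = 0` for `j ≥ n`; i.e. the mapping-cone resolution of `I`
with free modules of ranks `(h+1)·C(n,h+2)` is minimal. -/
theorem betti_numbers_of_complete_grid_or_pseudo_grid
    (K : Type) [Field K] [Infinite K] (n : ℕ) (hn : 2 ≤ n)
    (ℓ : Fin n → ℕ) (hℓ : ∀ j, 0 < ℓ j)
    (L : (j : Fin n) → Fin (ℓ j) → MvPolynomial (Fin (n + 1)) K)
    (hLhom : ∀ j i, (L j i).IsHomogeneous 1)
    (hα : ∀ c : (j : Fin n) → Fin (ℓ j), LinearIndependent K (fun j => L j (c j)))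
    (f : Fin n → MvPolynomial (Fin (n + 1)) K)
    (hf : ∀ j, f j = ∏ i : Fin (ℓ j), L j i) :
    (∀ h : ℕ, h ≤ n - 2 →
      kdim K (MvPolynomial (Fin (n + 1)) K)
          (torModule K (n + 1)
            (Ideal.span {g : MvPolynomial (Fin (n + 1)) K |
              ∃ i j : Fin n, i < j ∧ g = f i * f j})
            (h + 1)) =
        ((h + 1) * Nat.choose n (h + 2) : ℕ)) ∧
    (∀ j : ℕ, n ≤ j →
      Subsingleton
        (torModule K (n + 1)
          (Ideal.span {g : MvPolynomial (Fin (n + 1)) K |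
            ∃ i j : Fin n, i < j ∧ g = f i * f j})
          j)) := by
  have : ∀ j, Nonempty (Fin (ℓ j)) := fun j ↦ ⟨⟨0, hℓ j⟩⟩
  have H := betti_numbers_of_complete_grid_or_pseudo_grid_general K (n + 1) n L hLhom hα f hf
  refine ⟨fun h _ ↦ (H h).1, fun j hj ↦ ?_⟩
  obtain ⟨h, rfl⟩ : ∃ h, j = h + 1 := Nat.exists_eq_add_one.2 (by lia)
  exact (H h).2 hj
end

section
/- Let S = K[x_1, …, x_n] and P = K[y_1, …, y_n] with n ≥ 2, let ℓ_1, …, ℓ_n and m be positive integers, let Γ = ⋂_{k=1}^n (x_1^{ℓ_1}, …, x_{k−1}^{ℓ_{k−1}}, x_{k+1}^{ℓ_{k+1}}, …, x_n^{ℓ_n})^m and Γ̄ = ⋂_{k=1}^n (y_1, …, y_{k−1}, y_{k+1}, …, y_n)^m. Then for every h ≥ 0, dim_K Tor_h^S(S/Γ, S/(x_1, …, x_n)) = dim_K Tor_h^P(P/Γ̄, P/(y_1, …, y_n)); that is, the total Betti numbers of Γ (and hence of an m-fat complete grid or pseudo-grid of lines in ℙ^n) coincide with those of the m-fat point scheme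 supported on the n coordinate points of ℙ^{n−1}. -/
open CategoryTheory MvPolynomial

/-- `dim_K Tor_h^T(T/N, T/𝔪_T)` for `T = K[x_1,…,x_n]` with irrelevant maximal ideal
`𝔪_T`: the `h`-th total Betti number of `T/N`. -/
noncomputable def torBetti (K : Type) [Field K] (n : ℕ)
    (N : Ideal (MvPolynomial (Fin n) K)) (h : ℕ) : Cardinal :=
  kdim K (MvPolynomial (Fin n) K)
    (((Tor (ModuleCat (MvPolynomial (Fin n) K)) h).obj
        (ModuleCat.of _ (MvPolynomial (Fin n) K ⧸ N))).obj
      (ModuleCat.of _ (MvPolynomial (Fin n) K ⧸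
        Ideal.span (Set.range (X : Fin n → MvPolynomial (Fin n) K)))))

/-!
Let `φ` be the substitution `y_j ↦ x_j ^ ℓ_j`. The monomials with exponents `r_j < ℓ_j` form a basis
of the target over the source of `φ`, so extending ideals along `φ` commutes with intersections; in
particular `Γ` is the extension of `Γ̄`. By flat base change,
`Tor^P(P/Γ̄, S/𝔪_S) ≅ Tor^S(S/Γ, S/𝔪_S)`. Finally `P/𝔪_P ≅ S/𝔪_S` over `P`, because `φ` preserves
constant coefficients and every class modulo `𝔪_S` contains a constant.
-/

universe u

/-- The ring homomorphism `φ` makes `S` a projective `R`-module. Phrased without an `Algebra R S`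
instance because `φ` is an endomorphism of a polynomial ring in the application. -/
def IsProjectiveRingHom {R S : Type*} [CommRing R] [CommRing S] (φ : R →+* S) : Prop :=
  letI := φ.toAlgebra
  Module.Projective R S

theorem mem_smul_top_iff_forall_dual {R M : Type*} [CommSemiring R] [AddCommMonoid M] [Module R M]
    [Module.Projective R M] (I : Ideal R) (x : M) :
    x ∈ (I • ⊤ : Submodule R M) ↔ ∀ f : Module.Dual R M, f x ∈ I := by
  constructor
  · intro hx f
    simpa using Submodule.smul_top_le_comap_smul_top I f hx
  · intro hx
    obtain ⟨s, hs⟩ := Module.projective_def.mp ‹Module.Projective R M›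
    rw [← hs x, Finsupp.linearCombination_apply]
    exact Submodule.sum_mem _ fun y _ =>
      Submodule.smul_mem_smul (hx (Finsupp.lapply y ∘ₗ s)) Submodule.mem_top

theorem IsProjectiveRingHom.map_iInf {ι : Sort*} {R S : Type*} [CommRing R] [CommRing S]
    {φ : R →+* S} (hφ : IsProjectiveRingHom φ) (I : ι → Ideal R) :
    (⨅ k, I k).map φ = ⨅ k, (I k).map φ := by
  let := φ.toAlgebra
  have : Module.Projective R S := hφ
  have mem_map (J : Ideal R) (x : S) : x ∈ J.map φ ↔ ∀ f : Module.Dual R S, f x ∈ J := by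
    rw [← mem_smul_top_iff_forall_dual, Ideal.smul_top_eq_map]
    rfl
  ext x
  simp only [mem_map, Submodule.mem_iInf]
  exact forall_comm

theorem IsProjectiveRingHom.of_basis {ι κ K R S : Type*} [CommRing K] [CommRing R] [CommRing S]
    [Algebra K R] [Algebra K S] (φ : R →ₐ[K] S) (b : Module.Basis ι K R)
    (b' : Module.Basis (κ × ι) K S) (c : κ → S) (h : ∀ j i, b' (j, i) = φ (b i) * c j) :
    IsProjectiveRingHom (φ : R →+* S) := by
  let := φ.toAlgebra
  have : IsScalarTower K R S := .of_algebraMap_eq' φ.comp_algebraMap.symm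
  let e : (κ →₀ R) ≃ₗ[K] S := (Finsupp.basis fun _ : κ => b).equiv b' (Equiv.sigmaEquivProd κ ι)
  have he : (Finsupp.linearCombination R c).restrictScalars K = e.toLinearMap :=
    (Finsupp.basis fun _ : κ => b).ext fun ⟨j, i⟩ => by
      change _ = (Finsupp.basis fun _ : κ => b).equiv b' (Equiv.sigmaEquivProd κ ι) _
      rw [Module.Basis.equiv_apply]
      simpa [Algebra.smul_def] using! (h j i).symm
  have hc : Function.Bijective (Finsupp.linearCombination R c) :=
    (congrArg (fun f : (κ →₀ R) →ₗ[K] S => Function.Bijective f) he).mpr e.bijective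
  exact .of_equiv' (LinearEquiv.ofBijective _ hc)

theorem IsProjectiveRingHom.preservesProjectiveObjects {R S : Type u} [CommRing R] [CommRing S]
    {φ : R →+* S} (hφ : IsProjectiveRingHom φ) :
    (ModuleCat.restrictScalars.{u} φ).PreservesProjectiveObjects := by
  have : Module.Projective R ((ModuleCat.restrictScalars φ).obj (ModuleCat.of S S)) := hφ
  have : (ModuleCat.coextendScalars.{u} φ).PreservesEpimorphisms :=
    ⟨fun {M N} g _ => (ModuleCat.epi_iff_surjective _).mpr fun f =>
      Module.projective_lifting_property (M := M) (N := N) g.hom f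
        ((ModuleCat.epi_iff_surjective g).mp ‹_›)⟩
  exact Functor.preservesProjectiveObjects_of_adjunction_of_preservesEpimorphisms
    (ModuleCat.restrictCoextendScalarsAdj φ)

open TensorProduct in
/-- Tensoring an `R`-module `M` with an `S`-module `Q` over `R` is the same as tensoring its base
change `S ⊗[R] M` with `Q` over `S`. -/
noncomputable def tensorEquivBaseChangeTensor (R S : Type*) [CommSemiring R] [CommSemiring S]
    [Algebra R S] (M Q : Type*) [AddCommMonoid M] [Module R M] [AddCommMonoid Q] [Module R Q]
    [Module S Q] [IsScalarTower R S Q] : M ⊗[R] Q ≃ₗ[R] (S ⊗[R] M) ⊗[S] Q :=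
  TensorProduct.comm R M Q ≪≫ₗ
    ((AlgebraTensorModule.cancelBaseChange R S S Q M).symm ≪≫ₗ
      TensorProduct.comm S Q (S ⊗[R] M)).restrictScalars R

open MonoidalCategory in
/-- The isomorphism `M ⊗[R] Q ≅ (S ⊗[R] M) ⊗[S] Q` of functors in the `S`-module `Q`, where `S` is
an `R`-algebra via `φ`. -/
noncomputable def restrictScalarsCompTensoringLeftIso {R S : Type u} [CommRing R] [CommRing S]
    (φ : R →+* S) (M : ModuleCat.{u} R) :
    ModuleCat.restrictScalars φ ⋙ (tensoringLeft (ModuleCat.{u} R)).obj M ≅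
      (tensoringLeft (ModuleCat.{u} S)).obj ((ModuleCat.extendScalars φ).obj M) ⋙
        ModuleCat.restrictScalars φ :=
  letI := φ.toAlgebra
  NatIso.ofComponents
    (fun Q =>
      letI : Module R Q := Module.compHom Q φ
      haveI : IsScalarTower R S Q := ⟨fun r s q => mul_smul (φ r) s q⟩
      (tensorEquivBaseChangeTensor R S M Q).toModuleIso)
    fun _ => ModuleCat.MonoidalCategory.tensor_ext fun _ _ => rfl

open MonoidalCategory in
/-- Flat base change for `Tor`: along a projective ring homomorphism,
`Tor_h^R(M, N) ≅ Tor_h^S(S ⊗[R] M, N)` for an `R`-module `M` and an `S`-module `N`. It is computed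
on a projective resolution of `N` over `S`, which is also one over `R`. -/
noncomputable def IsProjectiveRingHom.torRestrictScalarsIso {R S : Type u} [CommRing R] [CommRing S]
    {φ : R →+* S} (hφ : IsProjectiveRingHom φ) (M : ModuleCat.{u} R) (N : ModuleCat.{u} S) (h : ℕ) :
    ((Tor (ModuleCat.{u} R) h).obj M).obj ((ModuleCat.restrictScalars φ).obj N) ≅
      (ModuleCat.restrictScalars φ).obj
        (((Tor (ModuleCat.{u} S) h).obj ((ModuleCat.extendScalars φ).obj M)).obj N) :=
  have := hφ.preservesProjectiveObjects
  let P := projectiveResolution N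
  let ρ := ModuleCat.restrictScalars.{u} φ
  let F := (tensoringLeft (ModuleCat.{u} S)).obj ((ModuleCat.extendScalars φ).obj M)
  let G := (tensoringLeft (ModuleCat.{u} R)).obj M
  let c := ComplexShape.down ℕ
  let C := (F.mapHomologicalComplex c).obj P.complex
  calc (G.leftDerived h).obj (ρ.obj N)
    _ ≅ (((ρ ⋙ G).mapHomologicalComplex c).obj P.complex).homology h :=
      (ρ.mapProjectiveResolution P).isoLeftDerivedObj G h
    _ ≅ ((ρ.mapHomologicalComplex c).obj C).homology h :=
      (HomologicalComplex.homologyFunctor _ _ h).mapIso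
        ((NatIso.mapHomologicalComplex (restrictScalarsCompTensoringLeftIso φ M) c).app P.complex)
    _ ≅ ρ.obj (C.homology h) := (C.sc h).mapHomologyIso ρ
    _ ≅ ρ.obj ((F.leftDerived h).obj N) := ρ.mapIso (P.isoLeftDerivedObj F h).symm

/-- The base change of the cyclic module `R ⧸ I` along `φ` is `S ⧸ IS`. -/
noncomputable def extendScalarsQuotientIso {R S : Type u} [CommRing R] [CommRing S]
    (φ : R →+* S) (I : Ideal R) :
    (ModuleCat.extendScalars φ).obj (ModuleCat.of R (R ⧸ I)) ≅ ModuleCat.of S (S ⧸ I.map φ) :=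
  letI := φ.toAlgebra
  (Algebra.TensorProduct.quotIdealMapEquivTensorQuot S I).toLinearEquiv.symm.toModuleIso

/-- If `R` surjects onto `S ⧸ J`, then `S ⧸ J` is a cyclic `R`-module with annihilator
`J.comap φ`. -/
noncomputable def restrictScalarsQuotientIso {R S : Type u} [CommRing R] [CommRing S]
    (φ : R →+* S) (J : Ideal S) (hJ : Function.Surjective ((Ideal.Quotient.mk J).comp φ)) :
    ModuleCat.of R (R ⧸ J.comap φ) ≅ (ModuleCat.restrictScalars φ).obj (ModuleCat.of S (S ⧸ J)) :=
  letI := φ.toAlgebra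
  (LinearEquiv.ofBijective (Ideal.quotientMapₐ J (Algebra.ofId R S) le_rfl).toLinearMap
    ⟨Ideal.quotientMap_injective, fun y =>
      let ⟨r, hr⟩ := hJ y
      ⟨Ideal.Quotient.mk _ r, hr⟩⟩).toModuleIso

theorem kdim_eq_of_iso {K R : Type} [Field K] [CommRing R] [Algebra K R] {M N : ModuleCat R}
    (e : M ≅ N) : kdim K R M = kdim K R N :=
  ((ModuleCat.restrictScalars (algebraMap K R)).mapIso e).toLinearEquiv.rank_eq

theorem kdim_restrictScalars {K R S : Type} [Field K] [CommRing R] [CommRing S]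
    [Algebra K R] [Algebra K S] (φ : R →ₐ[K] S) (M : ModuleCat S) :
    kdim K R ((ModuleCat.restrictScalars (φ : R →+* S)).obj M) = kdim K S M :=
  ((ModuleCat.restrictScalarsComp' (algebraMap K R) (φ : R →+* S) (algebraMap K S)
    φ.comp_algebraMap.symm).app M).toLinearEquiv.rank_eq.symm

theorem IsProjectiveRingHom.kdim_tor_map {K R S : Type} [Field K] [CommRing R] [CommRing S]
    [Algebra K R] [Algebra K S] {φ : R →ₐ[K] S} (hφ : IsProjectiveRingHom (φ : R →+* S))
    (I : Ideal R) (J : Ideal S)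
    (hJ : Function.Surjective ((Ideal.Quotient.mk J).comp (φ : R →+* S))) (h : ℕ) :
    kdim K S (((Tor (ModuleCat S) h).obj (ModuleCat.of S (S ⧸ I.map (φ : R →+* S)))).obj
        (ModuleCat.of S (S ⧸ J))) =
      kdim K R (((Tor (ModuleCat R) h).obj (ModuleCat.of R (R ⧸ I))).obj
        (ModuleCat.of R (R ⧸ J.comap (φ : R →+* S)))) := by
  rw [← kdim_restrictScalars φ]
  refine kdim_eq_of_iso (Iso.symm ?_)
  exact ((Tor (ModuleCat R) h).obj _).mapIso (restrictScalarsQuotientIso _ J hJ) ≪≫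
    hφ.torRestrictScalarsIso _ _ h ≪≫
    (ModuleCat.restrictScalars _).mapIso
      (((Tor (ModuleCat S) h).mapIso (extendScalarsQuotientIso _ I)).app _)

theorem idealOfVars_eq_ker_constantCoeff (σ R : Type*) [CommSemiring R] :
    idealOfVars σ R = RingHom.ker constantCoeff := by
  ext p
  rw [← pow_one (idealOfVars σ R), mem_pow_idealOfVars_iff']
  simp [Finsupp.degree_eq_zero_iff, constantCoeff_eq]

section expandVars

variable {σ R : Type*} [CommRing R]

variable (R) in
/-- The substitution `X j ↦ X j ^ ℓ j`; `MvPolynomial.expand` is the case of constant `ℓ`. -/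
noncomputable def expandVars (ℓ : σ → ℕ) : MvPolynomial σ R →ₐ[R] MvPolynomial σ R :=
  aeval fun j => X j ^ ℓ j

theorem expandVars_X (ℓ : σ → ℕ) (j : σ) :
    expandVars R ℓ (X j : MvPolynomial σ R) = X j ^ ℓ j :=
  aeval_X _ j

theorem expandVars_monomial (ℓ : σ → ℕ) (d : σ →₀ ℕ) (r : R) :
    expandVars R ℓ (monomial d r) = monomial (ℓ • d) r := by
  have hd : (ℓ • d).support ⊆ d.support := fun j => by contrapose; simp +contextual
  rw [expandVars, aeval_monomial, algebraMap_eq, monomial_eq (s := ℓ • d),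
    Finsupp.prod_of_support_subset _ hd _ fun j _ => pow_zero _]
  simp [Finsupp.prod, pow_mul]

theorem constantCoeff_expandVars {ℓ : σ → ℕ} (hℓ : ∀ j, 0 < ℓ j) (p : MvPolynomial σ R) :
    constantCoeff (expandVars R ℓ p) = constantCoeff p := by
  have hcomp : (constantCoeff (σ := σ) (R := R)).comp (expandVars R ℓ).toRingHom =
      constantCoeff := by
    ext <;> simp [expandVars, (hℓ _).ne']
  exact RingHom.congr_fun hcomp p

variable (R)

theorem comap_expandVars_idealOfVars {ℓ : σ → ℕ} (hℓ : ∀ j, 0 < ℓ j) :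
    (idealOfVars σ R).comap (expandVars R ℓ : MvPolynomial σ R →+* MvPolynomial σ R) =
      idealOfVars σ R := by
  ext p
  simp [idealOfVars_eq_ker_constantCoeff, constantCoeff_expandVars hℓ]

theorem surjective_mk_idealOfVars_comp_expandVars (ℓ : σ → ℕ) :
    Function.Surjective ((Ideal.Quotient.mk (idealOfVars σ R)).comp
      (expandVars R ℓ : MvPolynomial σ R →+* MvPolynomial σ R)) := by
  intro y
  obtain ⟨p, rfl⟩ := Ideal.Quotient.mk_surjective y
  refine ⟨C (constantCoeff p), Ideal.Quotient.eq.mpr ?_⟩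
  simp [idealOfVars_eq_ker_constantCoeff, expandVars]

/-- Coordinatewise division with remainder of exponent vectors by `ℓ`, as a bijection between the
vectors `d` and the pairs of a remainder bounded by `ℓ` and a quotient. -/
noncomputable def exponentDivModEquiv {ℓ : σ → ℕ} (hℓ : ∀ j, 0 < ℓ j) :
    (σ →₀ ℕ) ≃ {r : σ →₀ ℕ // ∀ j, r j < ℓ j} × (σ →₀ ℕ) where
  toFun d :=
    (⟨.onFinset d.support (fun j => d j % ℓ j) fun j => by contrapose; simp +contextual,
      fun j => Nat.mod_lt _ (hℓ j)⟩,
     .onFinset d.support (fun j => d j / ℓ j) fun j => by contrapose; simp +contextual)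
  invFun p := ℓ • p.2 + p.1
  left_inv d := Finsupp.ext fun j => Nat.div_add_mod _ _
  right_inv p := by
    ext j
    · simp [Nat.mod_eq_of_lt (p.1.2 j)]
    · simp [Nat.mul_add_div (hℓ j), Nat.div_eq_of_lt (p.1.2 j)]

theorem isProjectiveRingHom_expandVars {ℓ : σ → ℕ} (hℓ : ∀ j, 0 < ℓ j) :
    IsProjectiveRingHom (expandVars R ℓ : MvPolynomial σ R →+* MvPolynomial σ R) :=
  .of_basis (expandVars R ℓ) (basisMonomials σ R)
    ((basisMonomials σ R).reindex (exponentDivModEquiv hℓ)) (fun r => monomial r 1)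
    fun r d => by simp [exponentDivModEquiv, expandVars_monomial]

end expandVars

theorem torBetti_map_expandVars {K : Type} [Field K] {n : ℕ} {ℓ : Fin n → ℕ} (hℓ : ∀ j, 0 < ℓ j)
    (I : Ideal (MvPolynomial (Fin n) K)) (h : ℕ) :
    torBetti K n (I.map (expandVars K ℓ : MvPolynomial (Fin n) K →+* MvPolynomial (Fin n) K)) h =
      torBetti K n I h := by
  have := (isProjectiveRingHom_expandVars K hℓ).kdim_tor_map (K := K) I (idealOfVars (Fin n) K)
    (surjective_mk_idealOfVars_comp_expandVars K ℓ) h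
  rwa [comap_expandVars_idealOfVars K hℓ] at this

theorem totalBetti_fat_grid_eq_totalBetti_fat_points_general {K : Type} [Field K] {n : ℕ}
    {ℓ : Fin n → ℕ} (hℓ : ∀ j, 0 < ℓ j) {ι : Sort*} (s : ι → Set (Fin n)) (m : ι → ℕ) (h : ℕ) :
    torBetti K n (⨅ k, Ideal.span ((fun j => X j ^ ℓ j) '' s k) ^ m k) h =
      torBetti K n (⨅ k, Ideal.span (X '' s k) ^ m k) h := by
  rw [← torBetti_map_expandVars hℓ (⨅ k, Ideal.span (X '' s k) ^ m k),
    (isProjectiveRingHom_expandVars K hℓ).map_iInf]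
  simp [Ideal.map_pow, Ideal.map_span, Set.image_image, expandVars_X]

/-- Let `Γ = ⋂_{k=1}^n (x_1^{ℓ_1},…,x̂_k^{ℓ_k},…,x_n^{ℓ_n})^m ⊆ S` and
`Γ̄ = ⋂_{k=1}^n (y_1,…,ŷ_k,…,y_n)^m ⊆ P`.  Then the total Betti numbers of `Γ` coincide
with those of `Γ̄`: `dim_K Tor_h^S(S/Γ, S/𝔪) = dim_K Tor_h^P(P/Γ̄, P/𝔪)` for all `h`. -/
theorem totalBetti_fat_grid_eq_totalBetti_fat_points
    (K : Type) [Field K] [Infinite K] (n : ℕ) (hn : 2 ≤ n)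
    (ℓ : Fin n → ℕ) (hℓ : ∀ j, 0 < ℓ j) (m : ℕ) (hm : 0 < m) :
    ∀ h : ℕ,
      torBetti K n
          (⨅ k : Fin n,
            (Ideal.span ((fun j : Fin n => (X j : MvPolynomial (Fin n) K) ^ ℓ j) ''
              {j | j ≠ k})) ^ m) h =
        torBetti K n
          (⨅ k : Fin n,
            (Ideal.span ((fun j : Fin n => (X j : MvPolynomial (Fin n) K)) ''
              {j | j ≠ k})) ^ m) h := by
  exact totalBetti_fat_grid_eq_totalBetti_fat_points_general hℓ (fun k => {j | j ≠ k}) fun _ => m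
end
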